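/- arXiv:0707.1975 — 2 statements merged into one kernel-verified Lean document; each statement's English description precedes it below -/
import Mathlib

section
/- Let n be a positive integer and A = {a ∈ {1,...,n} : gcd(a,n) = 1}. Then d_A(Z/nZ) = 1 + Ω(n), where Ω(n) is the number of prime factors of n counted with multiplicity. -/
/-- A sequence `g` admits a nonempty subsequence with a zero linear combination
with coefficients drawn from `A` (with repetition allowed). -/
def hasZeroComb {G : Type*} [AddCommGroup G] (A : Finset ℕ) {k : ℕ} (g : Fin k → G) : Prop :=
  ∃ s : Finset (Fin k), s.Nonempty ∧ ∃ a : Fin k → ℕ,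
    (∀ i ∈ s, a i ∈ A) ∧ ∑ i ∈ s, a i • g i = 0

/-!
Call a family in a commutative ring *related* if some linear combination of it with unit
coefficients vanishes. An even number of associates of one element `d` is related, with
coefficients `±1` up to units, and adding to it multiples of `d * ϖ`, with `ϖ` nilpotent, only
perturbs one coefficient by a nilpotent. Hence modulo a prime power `p ^ a` a family is related as
soon as, for each `j < a`, evenly many of its members are associated to `p ^ j`. By the Chinese
remainder theorem a family modulo `n` is related under `Ω(n)` parity conditions, and linear algebra
over `𝔽₂` extracts from any `Ω(n) + 1` elements a nonempty subfamily satisfying all of them.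

Conversely, if `n = p₁ ⋯ pₖ`, the sequence `1, p₁, p₁p₂, …, p₁ ⋯ pₖ₋₁` has no related nonempty
subsequence: the next partial product divides every later term used but not the first one.
-/

open Finset

theorem mul_dvd_of_not_associated {M : Type*} [Monoid M] {d ϖ x : M}
    (hunit : ∀ x, ¬ϖ ∣ x → IsUnit x) (hdvd : d ∣ x) (hx : ¬Associated d x) : d * ϖ ∣ x := by
  obtain ⟨c, rfl⟩ := hdvd
  by_contra hc
  obtain ⟨v, rfl⟩ := hunit c fun hϖ ↦ hc (mul_dvd_mul_left d hϖ)
  exact hx ⟨v, rfl⟩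

section UnitRelation

variable {ι R S : Type*} [Semiring R] [Semiring S] {s : Finset ι} {g : ι → R}

/-- The members of the family `g` indexed by `s` satisfy a linear relation all of whose
coefficients are units. In `ZMod n` these coefficients are the classes of the integers coprime
to `n`. The values of `u` outside `s` are irrelevant. -/
def HasUnitRelation (s : Finset ι) (g : ι → R) : Prop :=
  ∃ u : ι → Rˣ, ∑ i ∈ s, u i * g i = 0

theorem HasUnitRelation.map (h : HasUnitRelation s g) (f : R →+* S) :
    HasUnitRelation s (f ∘ g) := by
  obtain ⟨u, hu⟩ := h
  refine ⟨fun i ↦ Units.map f (u i), ?_⟩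
  simpa using congrArg f hu

theorem hasUnitRelation_pi {K : Type*} {R : K → Type*} [∀ k, Semiring (R k)]
    {g : ι → ∀ k, R k} (h : ∀ k, HasUnitRelation s fun i ↦ g i k) : HasUnitRelation s g := by
  choose u hu using h
  refine ⟨fun i ↦ MulEquiv.piUnits.symm fun k ↦ u k i, funext fun k ↦ ?_⟩
  simpa [Finset.sum_apply] using hu k

end UnitRelation

section CommRing

variable {ι R : Type*} [CommRing R] {s : Finset ι} {g : ι → R} {d ϖ : R}

theorem not_hasUnitRelation_of_forall_exists_dvd [LinearOrder ι]
    (h : ∀ i, ∃ d, (∀ j > i, d ∣ g j) ∧ ¬d ∣ g i) (hs : s.Nonempty) : ¬HasUnitRelation s g := by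
  rintro ⟨u, hu⟩
  obtain ⟨d, hd, hdi⟩ := h (s.min' hs)
  rw [← add_sum_erase s _ (s.min'_mem hs)] at hu
  have hrest : d ∣ ∑ j ∈ s.erase (s.min' hs), u j * g j :=
    dvd_sum fun j hj ↦ (hd j (s.min'_lt_of_mem_erase_min' hs hj)).mul_left _
  have hmin : d ∣ u (s.min' hs) * g (s.min' hs) :=
    (dvd_add_left hrest).mp (hu ▸ dvd_zero d)
  exact hdi (Units.dvd_mul_left.mp hmin)

theorem exists_intUnits_sum_eq_zero (hs : Even #s) : ∃ ε : ι → ℤˣ, ∑ i ∈ s, (ε i : ℤ) = 0 := by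
  classical
  obtain ⟨r, hr⟩ := hs
  obtain ⟨t, hts, ht⟩ := exists_subset_card_eq (show r ≤ #s by lia)
  refine ⟨fun i ↦ if i ∈ t then 1 else -1, ?_⟩
  have hpos : ∑ i ∈ t, ((if i ∈ t then 1 else -1 : ℤˣ) : ℤ) = r := by
    rw [sum_congr rfl fun i hi ↦ by rw [if_pos hi]]
    simp [ht]
  have hneg : ∑ i ∈ s \ t, ((if i ∈ t then 1 else -1 : ℤˣ) : ℤ) = -r := by
    rw [sum_congr rfl fun i hi ↦ by rw [if_neg (mem_sdiff.mp hi).2]]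
    simp [card_sdiff_of_subset hts, ht, hr]
  rw [← sum_sdiff hts, hpos, hneg, neg_add_cancel]

theorem hasUnitRelation_of_associated (hs : Even #s) (h : ∀ i ∈ s, Associated d (g i)) :
    HasUnitRelation s g := by
  obtain ⟨ε, hε⟩ := exists_intUnits_sum_eq_zero hs
  choose! u hu using h
  refine ⟨fun i ↦ Units.map (Int.castRingHom R) (ε i) * (u i)⁻¹, ?_⟩
  calc ∑ i ∈ s, ((Units.map (Int.castRingHom R) (ε i) * (u i)⁻¹ : Rˣ) : R) * g i
      = ∑ i ∈ s, ((ε i : ℤ) : R) * d := sum_congr rfl fun i hi ↦ by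
        rw [← hu i hi, mul_comm d]
        simp [mul_assoc]
    _ = ((∑ i ∈ s, (ε i : ℤ) : ℤ) : R) * d := by rw [← sum_mul, Int.cast_sum]
    _ = 0 := by rw [hε, Int.cast_zero, zero_mul]

theorem hasUnitRelation_of_sum_eq_nilpotent_mul {i : ι} (hi : i ∈ s) {x : R} (hx : IsNilpotent x)
    (u : ι → Rˣ) (hu : ∑ j ∈ s, u j * g j = x * g i) : HasUnitRelation s g := by
  classical
  obtain ⟨v, hv⟩ : IsUnit (u i - x : R) := by
    rw [sub_eq_add_neg]
    exact hx.neg.isUnit_add_left_of_commute (u i).isUnit (Commute.all _ _)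
  refine ⟨Function.update u i v, ?_⟩
  have hrest : ∑ j ∈ s.erase i, (Function.update u i v j : R) * g j =
      ∑ j ∈ s.erase i, u j * g j :=
    sum_congr rfl fun j hj ↦ by rw [Function.update_of_ne (ne_of_mem_erase hj)]
  rw [← add_sum_erase s _ hi] at hu ⊢
  rw [hrest, Function.update_self, hv]
  linear_combination hu

open scoped Classical in
theorem hasUnitRelation_of_even_card_associated (hϖ : IsNilpotent ϖ)
    (hunit : ∀ x, ¬ϖ ∣ x → IsUnit x) (hdvd : ∀ i ∈ s, d ∣ g i)
    (heven : Even #{i ∈ s | Associated d (g i)}) {i₀ : ι} (hi₀ : i₀ ∈ s)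
    (hd : Associated d (g i₀)) : HasUnitRelation s g := by
  obtain ⟨u, hu⟩ := hasUnitRelation_of_associated heven fun i hi ↦ (mem_filter.mp hi).2
  have hrest : d * ϖ ∣ ∑ i ∈ s with ¬Associated d (g i), u i * g i := dvd_sum fun i hi ↦ by
    obtain ⟨his, hi⟩ := mem_filter.mp hi
    exact (mul_dvd_of_not_associated hunit (hdvd i his) hi).mul_left _
  obtain ⟨c, hc⟩ := (hd.mul_right ϖ).dvd_iff_dvd_left.mp hrest
  refine hasUnitRelation_of_sum_eq_nilpotent_mul hi₀
    ((Commute.all ϖ c).isNilpotent_mul_right hϖ) u ?_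
  rw [← sum_filter_add_sum_filter_not s (fun i ↦ Associated d (g i)), hu, hc]
  ring

open scoped Classical in
theorem hasUnitRelation_of_even_card_associated_pow {a : ℕ} (hϖ : ϖ ^ a = 0)
    (hunit : ∀ x, ¬ϖ ∣ x → IsUnit x)
    (heven : ∀ j < a, Even #{i ∈ s | Associated (ϖ ^ j) (g i)}) : HasUnitRelation s g := by
  by_contra hrel
  have hdvd : ∀ j ≤ a, ∀ i ∈ s, ϖ ^ j ∣ g i := by
    intro j
    induction j with
    | zero => simp
    | succ j ih =>
      intro hj i hi
      have hpow := ih (Nat.le_of_succ_le hj)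
      have hnot : ¬Associated (ϖ ^ j) (g i) := fun hassoc ↦ hrel <|
        hasUnitRelation_of_even_card_associated ⟨a, hϖ⟩ hunit hpow (heven j hj) hi hassoc
      exact pow_succ ϖ j ▸ mul_dvd_of_not_associated hunit (hpow i hi) hnot
  have hzero : ∀ i ∈ s, g i = 0 := fun i hi ↦ zero_dvd_iff.mp (hϖ ▸ hdvd a le_rfl i hi)
  exact hrel ⟨1, sum_eq_zero fun i hi ↦ by rw [hzero i hi, mul_zero]⟩

end CommRing

section Parity

variable {ι κ : Type*} [Fintype ι] [Fintype κ]

open scoped Classical in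
theorem exists_nonempty_forall_even_card_filter (hcard : Fintype.card κ < Fintype.card ι)
    (r : κ → ι → Prop) : ∃ s : Finset ι, s.Nonempty ∧ ∀ k, Even #{i ∈ s | r k i} := by
  let M : Matrix κ ι (ZMod 2) := Matrix.of fun k i ↦ if r k i then 1 else 0
  obtain ⟨x, hx, hx0⟩ := (Submodule.ne_bot_iff _).mp
    (LinearMap.ker_ne_bot_of_finrank_lt (f := M.mulVecLin) (by simpa using hcard))
  obtain ⟨i, hi⟩ := Function.ne_iff.mp hx0
  refine ⟨({i | x i ≠ 0} : Finset ι), ⟨i, by simpa using hi⟩, fun k ↦ ?_⟩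
  have hbit : ∀ z : ZMod 2, z = 0 ∨ z = 1 := by decide
  rw [← ZMod.natCast_eq_zero_iff_even, filter_filter, natCast_card_filter]
  calc ∑ i, (if x i ≠ 0 ∧ r k i then 1 else 0 : ZMod 2)
      = ∑ i, M k i * x i := sum_congr rfl fun i _ ↦ by
        rcases hbit (x i) with h | h <;> simp [M, h]
    _ = 0 := congrFun hx k

theorem exists_hasUnitRelation_of_sum_lt_card {R : κ → Type*} [∀ k, CommRing (R k)]
    {ϖ : ∀ k, R k} {a : κ → ℕ} (hϖ : ∀ k, ϖ k ^ a k = 0)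
    (hunit : ∀ k x, ¬ϖ k ∣ x → IsUnit x) (hcard : ∑ k, a k < Fintype.card ι)
    (g : ι → ∀ k, R k) : ∃ s : Finset ι, s.Nonempty ∧ HasUnitRelation s g := by
  obtain ⟨s, hs, heven⟩ := exists_nonempty_forall_even_card_filter
    (κ := Σ k, Fin (a k)) (by simpa using hcard)
    fun q i ↦ Associated (ϖ q.1 ^ (q.2 : ℕ)) (g i q.1)
  exact ⟨s, hs, hasUnitRelation_pi fun k ↦
    hasUnitRelation_of_even_card_associated_pow (hϖ k) (hunit k) fun j hj ↦ heven ⟨k, j, hj⟩⟩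

end Parity

section ZMod

variable {n : ℕ}

theorem isUnit_of_not_natCast_prime_dvd {p a : ℕ} (hp : p.Prime) {x : ZMod (p ^ a)}
    (hx : ¬(p : ZMod (p ^ a)) ∣ x) : IsUnit x := by
  have : NeZero (p ^ a) := ⟨pow_ne_zero a hp.ne_zero⟩
  rw [← ZMod.natCast_zmod_val x] at hx ⊢
  have hval : ¬p ∣ x.val := fun h ↦ hx (Nat.cast_dvd_cast h)
  exact (ZMod.isUnit_iff_coprime _ _).mpr ((hp.coprime_iff_not_dvd.mpr hval).symm.pow_right a)

theorem exists_hasUnitRelation_of_cardFactors_lt_card {ι : Type*} [Fintype ι] (hn : n ≠ 0)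
    (hcard : ArithmeticFunction.cardFactors n < Fintype.card ι) (g : ι → ZMod n) :
    ∃ s : Finset ι, s.Nonempty ∧ HasUnitRelation s g := by
  have hsum : ∑ p : n.primeFactors, n.factorization p = ArithmeticFunction.cardFactors n := by
    rw [ArithmeticFunction.cardFactors_eq_sum_factorization,
      sum_coe_sort n.primeFactors fun p ↦ n.factorization p]
    rfl
  have hpow (p : n.primeFactors) :
      ((p : ℕ) : ZMod (p ^ n.factorization p)) ^ n.factorization p = 0 := by
    rw [← Nat.cast_pow, ZMod.natCast_self]
  obtain ⟨s, hs, hrel⟩ := exists_hasUnitRelation_of_sum_lt_card hpow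
    (fun p _ ↦ isUnit_of_not_natCast_prime_dvd (Nat.prime_of_mem_primeFactors p.2))
    (hsum.trans_lt hcard) (ZMod.equivPi n hn ∘ g)
  refine ⟨s, hs, ?_⟩
  simpa [Function.comp_def] using hrel.map ((ZMod.equivPi n hn).symm : _ →+* ZMod n)

theorem dvd_of_zmod_natCast_dvd_natCast {d m : ℕ} (hd : d ∣ n) (h : (d : ZMod n) ∣ m) : d ∣ m := by
  have hcast := map_dvd (ZMod.castHom hd (ZMod d)) h
  rwa [map_natCast, map_natCast, ZMod.natCast_self, zero_dvd_iff,
    ZMod.natCast_eq_zero_iff] at hcast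

theorem not_prod_take_succ_dvd_prod_take {l : List ℕ} (hl : ∀ x ∈ l, 1 < x) {i : ℕ}
    (hi : i < l.length) : ¬(l.take (i + 1)).prod ∣ (l.take i).prod := by
  have hpos : 0 < (l.take i).prod :=
    List.prod_pos fun x hx ↦ zero_lt_one.trans (hl x (List.mem_of_mem_take hx))
  rw [List.prod_take_succ l i hi]
  exact Nat.not_dvd_of_pos_of_lt hpos (lt_mul_of_one_lt_right hpos (hl _ (List.getElem_mem hi)))

theorem exists_forall_not_hasUnitRelation {t : ℕ} (hn : n ≠ 0)
    (ht : t ≤ ArithmeticFunction.cardFactors n) :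
    ∃ g : Fin t → ZMod n, ∀ s : Finset (Fin t), s.Nonempty → ¬HasUnitRelation s g := by
  let l := n.primeFactorsList
  refine ⟨fun i ↦ ((l.take i).prod : ℕ), fun s ↦ not_hasUnitRelation_of_forall_exists_dvd
    fun i ↦ ⟨((l.take (i + 1)).prod : ℕ), fun j hij ↦ ?_, fun hdvd ↦ ?_⟩⟩
  · exact Nat.cast_dvd_cast (List.take_prefix_take_left hij).sublist.prod_dvd_prod
  · have hn_dvd : (l.take (i + 1)).prod ∣ n :=
      (List.take_prefix _ l).sublist.prod_dvd_prod.trans (Nat.prod_primeFactorsList hn).dvd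
    exact not_prod_take_succ_dvd_prod_take
      (fun p hp ↦ (Nat.prime_of_mem_primeFactorsList hp).one_lt) (i.2.trans_le ht)
      (dvd_of_zmod_natCast_dvd_natCast hn_dvd hdvd)

theorem exists_mem_Icc_coprime_natCast_eq [NeZero n] (u : (ZMod n)ˣ) :
    ∃ a ∈ Icc 1 n, a.Coprime n ∧ (a : ZMod n) = u := by
  have hcast : (((u - 1 : ZMod n).val + 1 : ℕ) : ZMod n) = u := by simp
  refine ⟨(u - 1 : ZMod n).val + 1, ?_, ?_, hcast⟩
  · exact mem_Icc.mpr ⟨Nat.le_add_left 1 _, ZMod.val_lt _⟩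
  · exact (ZMod.isUnit_iff_coprime _ n).mp (hcast.symm ▸ u.isUnit)

theorem hasZeroComb_iff_exists_hasUnitRelation [NeZero n] {A : Finset ℕ}
    (hA : ∀ a, a ∈ A ↔ a ∈ Icc 1 n ∧ a.Coprime n) {k : ℕ} {g : Fin k → ZMod n} :
    hasZeroComb A g ↔ ∃ s : Finset (Fin k), s.Nonempty ∧ HasUnitRelation s g := by
  refine exists_congr fun s ↦ and_congr_right fun _ ↦ ⟨?_, ?_⟩
  · rintro ⟨a, ha, hsum⟩
    have hunit : ∀ i ∈ s, ∃ u : (ZMod n)ˣ, (u : ZMod n) = a i := fun i hi ↦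
      ⟨ZMod.unitOfCoprime (a i) ((hA _).mp (ha i hi)).2, rfl⟩
    choose! u hu using hunit
    exact ⟨u, hsum ▸ sum_congr rfl fun i hi ↦ by rw [hu i hi, nsmul_eq_mul]⟩
  · rintro ⟨u, hsum⟩
    choose a haIcc hacop hau using fun i ↦ exists_mem_Icc_coprime_natCast_eq (u i)
    exact ⟨a, fun i _ ↦ (hA _).mpr ⟨haIcc i, hacop i⟩,
      hsum ▸ sum_congr rfl fun i _ ↦ by rw [nsmul_eq_mul, hau]⟩

end ZMod

theorem stmt12 {n : ℕ} (hn : 0 < n) (A : Finset ℕ)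
    (hA : ∀ a, a ∈ A ↔ a ∈ Finset.Icc 1 n ∧ Nat.Coprime a n) :
    IsLeast {t : ℕ | ∀ g : Fin t → ZMod n, hasZeroComb A g}
      (1 + n.primeFactorsList.length) := by
  have : NeZero n := ⟨hn.ne'⟩
  simp only [hasZeroComb_iff_exists_hasUnitRelation hA]
  refine ⟨fun g ↦ ?_, fun t ht ↦ ?_⟩
  · refine exists_hasUnitRelation_of_cardFactors_lt_card hn.ne' ?_ g
    rw [Fintype.card_fin, ArithmeticFunction.cardFactors_apply, Nat.one_add]
    exact Nat.lt_succ_self _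
  · by_contra! hlt
    obtain ⟨g, hg⟩ := exists_forall_not_hasUnitRelation hn.ne' (Nat.lt_one_add_iff.mp hlt)
    obtain ⟨s, hs, hrel⟩ := ht g
    exact hg s hs hrel
end

section
/- Let d ≥ 1 and p ≡ 3 (mod 4) a prime with p ≥ 2d+1. Let A_5 ⊆ {1,...,p-1} with |A_5| = (p-1)/2 and x ∈ A_5 ⟹ p-x ∉ A_5. Then ZS_{A_5}((Z/pZ)^d) = 2d + p^d. -/
/-- A sequence `g` admits a subsequence of length exactly `m` with a zero linear
combination with coefficients drawn from `A`. -/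
def hasZeroCombLen {G : Type*} [AddCommGroup G] (A : Finset ℕ) (m : ℕ) {k : ℕ} (g : Fin k → G) : Prop :=
  ∃ s : Finset (Fin k), s.card = m ∧ ∃ a : Fin k → ℕ,
    (∀ i ∈ s, a i ∈ A) ∧ ∑ i ∈ s, a i • g i = 0

/-!
For the upper bound, look at `n = 2d + p` of the vectors and let `χ` be the polynomial of degree
`|A|` that vanishes at `0` and equals `1` on `A`. The `d` linear equations `∑ xᵢ gᵢ = 0` together
with `∑ χ(xᵢ) = 0` have the trivial solution `x = 0`, and a polynomial that is nonzero at exactly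
one point of the grid `(A ∪ {0})ⁿ` has degree at least `n|A|`; this forces a second solution as
soon as `(p - 1)(d + |A|) < n|A|`, which just holds when `|A| = (p - 1)/2`. The number of nonzero
`xᵢ` is then a positive multiple of `p` below `2p`, hence `p`. Such blocks of length `p` can be
split off as long as `2d + p` vectors are left.

For the lower bound, take every vector of the standard basis twice, followed by zeros. A zero-sum
subsequence avoids the basis vectors, because neither an element of `A` nor a sum of two is
divisible by `p`.
-/

section Grid

open MvPolynomial

variable {σ R : Type*} [Fintype σ] [CommRing R]

/-- The polynomial `∏ᵢ ∏_{a ∈ T i} (Xᵢ - a)`, which vanishes at the points with some coordinate in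
the corresponding `T i`; it is used to cover all points of a grid but one. -/
noncomputable def coveringPolynomial (T : σ → Finset R) : MvPolynomial σ R :=
  ∏ i, ∏ a ∈ T i, (X i - C a)

theorem eval_coveringPolynomial_eq_zero_iff [IsDomain R] {T : σ → Finset R} {x : σ → R} :
    eval x (coveringPolynomial T) = 0 ↔ ∃ i, x i ∈ T i := by
  simp [coveringPolynomial, map_prod, Finset.prod_eq_zero_iff, sub_eq_zero]

theorem totalDegree_coveringPolynomial_le [Nontrivial R] (T : σ → Finset R) :
    (coveringPolynomial T).totalDegree ≤ ∑ i, (T i).card := by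
  refine (totalDegree_finsetProd _ _).trans (Finset.sum_le_sum fun i _ => ?_)
  refine (totalDegree_finsetProd _ _).trans ?_
  simpa using Finset.sum_le_card_nsmul (T i) _ 1
    fun a _ => (totalDegree_sub_C_le (X i) a).trans (totalDegree_X i).le

theorem coeff_coveringPolynomial [Nontrivial R] (T : σ → Finset R) :
    coeff (Finsupp.equivFunOnFinite.symm fun i => (T i).card) (coveringPolynomial T) = 1 := by
  classical
  let _ : LinearOrder σ := WellOrderingRel.isWellOrder.linearOrder
  let lex := MonomialOrder.lex (σ := σ)
  have degree_inner (i : σ) :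
      lex.degree (∏ a ∈ T i, (X i - C a)) = Finsupp.single i (T i).card := by
    rw [lex.degree_prod_of_regular]
    · simp [lex.degree_X_sub_C]
    · intro a _
      rw [(lex.monic_X_sub_C i a).leadingCoeff_eq_one]
      exact isRegular_one
  have degree_eq : (Finsupp.equivFunOnFinite.symm fun i => (T i).card) =
      ∑ i, lex.degree (∏ a ∈ T i, (X i - C a)) := by
    ext j
    simp [degree_inner, Finsupp.finsetSum_apply, Finsupp.single_apply]
  rw [degree_eq, coveringPolynomial, lex.coeff_prod_sum_degree]
  exact Finset.prod_eq_one fun i _ =>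
    MonomialOrder.Monic.prod fun a _ => lex.monic_X_sub_C i a

theorem exists_ne_eval_ne_zero_of_totalDegree_lt [IsDomain R] {P : MvPolynomial σ R}
    {S : σ → Finset R} {x₀ : σ → R} (hx₀ : ∀ i, x₀ i ∈ S i) (hP : eval x₀ P ≠ 0)
    (hdeg : P.totalDegree < ∑ i, ((S i).card - 1)) :
    ∃ x, x ≠ x₀ ∧ (∀ i, x i ∈ S i) ∧ eval x P ≠ 0 := by
  classical
  let T : σ → Finset R := fun i => (S i).erase (x₀ i)
  let W := coveringPolynomial T
  let t : σ →₀ ℕ := Finsupp.equivFunOnFinite.symm fun i => (T i).card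
  have degree_t : t.degree = ∑ i, (T i).card := by simp [t, Finsupp.degree_eq_sum]
  have hdegP : P.totalDegree < t.degree := by
    simpa only [degree_t, T, Finset.card_erase_of_mem (hx₀ _)] using hdeg
  have eval_W_ne_zero : eval x₀ W ≠ 0 := by
    simp [W, T, eval_coveringPolynomial_eq_zero_iff]
  -- The combination vanishes at `x₀`, while the top monomial of `W` survives in it.
  let Q := C (eval x₀ W) * P - C (eval x₀ P) * W
  have coeff_Q_ne_zero : coeff t Q ≠ 0 := by
    have coeff_P : coeff t P = 0 :=
      coeff_eq_zero_of_totalDegree_lt (by rwa [← Finsupp.degree_apply])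
    simpa [Q, W, t, coeff_coveringPolynomial, coeff_P] using hP
  have totalDegree_Q : Q.totalDegree = t.degree := by
    refine le_antisymm ((totalDegree_sub _ _).trans (max_le ?_ ?_))
      (le_totalDegree (mem_support_iff.2 coeff_Q_ne_zero))
    · exact (totalDegree_mul _ _).trans (by simpa using hdegP.le)
    · exact (totalDegree_mul _ _).trans
        (by simpa [degree_t] using totalDegree_coveringPolynomial_le T)
  obtain ⟨x, hxS, hQx⟩ := combinatorial_nullstellensatz_exists_eval_nonzero Q t coeff_Q_ne_zero
    totalDegree_Q S fun i => Finset.card_erase_lt_of_mem (hx₀ i)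
  have x_ne : x ≠ x₀ := by
    rintro rfl
    exact hQx (by simp [Q, mul_comm])
  obtain ⟨i, hi⟩ := Function.ne_iff.1 x_ne
  have eval_W : eval x W = 0 :=
    eval_coveringPolynomial_eq_zero_iff.2 ⟨i, Finset.mem_erase.2 ⟨hi, hxS i⟩⟩
  refine ⟨x, x_ne, hxS, fun hPx => hQx ?_⟩
  simp [Q, eval_W, hPx]

end Grid

section Chevalley

open MvPolynomial

variable {σ ι K : Type*} [Fintype ι] [Field K] [Fintype K]

/-- Chevalley's polynomial `∏ⱼ (1 - fⱼ ^ (q - 1))`, the indicator function over the field with `q`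
elements of the common zeros of the `fⱼ`. -/
noncomputable def commonZeroIndicator (f : ι → MvPolynomial σ K) : MvPolynomial σ K :=
  ∏ j, (1 - f j ^ (Fintype.card K - 1))

theorem eval_commonZeroIndicator_ne_zero_iff {f : ι → MvPolynomial σ K} {x : σ → K} :
    eval x (commonZeroIndicator f) ≠ 0 ↔ ∀ j, eval x (f j) = 0 := by
  have one_sub_pow_ne_zero_iff (y : K) : 1 - y ^ (Fintype.card K - 1) ≠ 0 ↔ y = 0 := by
    rcases eq_or_ne y 0 with rfl | hy
    · simp [(Nat.sub_pos_of_lt (Fintype.one_lt_card (α := K))).ne']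
    · simp [hy, FiniteField.pow_card_sub_one_eq_one y hy]
  simp [commonZeroIndicator, map_prod, Finset.prod_ne_zero_iff, one_sub_pow_ne_zero_iff]

theorem totalDegree_commonZeroIndicator_le (f : ι → MvPolynomial σ K) :
    (commonZeroIndicator f).totalDegree ≤ (Fintype.card K - 1) * ∑ j, (f j).totalDegree := by
  rw [Finset.mul_sum]
  refine (totalDegree_finsetProd _ _).trans (Finset.sum_le_sum fun j _ => ?_)
  exact (totalDegree_sub _ _).trans (max_le (by simp) (totalDegree_pow _ _))

theorem exists_ne_common_zero_of_sum_totalDegree_lt [Fintype σ] {f : ι → MvPolynomial σ K}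
    {S : σ → Finset K} {x₀ : σ → K} (hx₀ : ∀ i, x₀ i ∈ S i) (hf : ∀ j, eval x₀ (f j) = 0)
    (hdeg : (Fintype.card K - 1) * ∑ j, (f j).totalDegree < ∑ i, ((S i).card - 1)) :
    ∃ x, x ≠ x₀ ∧ (∀ i, x i ∈ S i) ∧ ∀ j, eval x (f j) = 0 := by
  simpa only [eval_commonZeroIndicator_ne_zero_iff] using
    exists_ne_eval_ne_zero_of_totalDegree_lt hx₀ (eval_commonZeroIndicator_ne_zero_iff.2 hf)
      ((totalDegree_commonZeroIndicator_le f).trans_lt hdeg)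

end Chevalley

theorem totalDegree_aeval_le {σ R : Type*} [CommSemiring R] (q : MvPolynomial σ R)
    (f : Polynomial R) :
    (Polynomial.aeval q f).totalDegree ≤ f.natDegree * q.totalDegree := by
  rw [Polynomial.aeval_eq_sum_range]
  refine MvPolynomial.totalDegree_finsetSum_le fun k hk => ?_
  refine (MvPolynomial.totalDegree_smul_le _ _).trans ((MvPolynomial.totalDegree_pow _ _).trans ?_)
  exact Nat.mul_le_mul_right _ (Finset.mem_range_succ_iff.1 hk)

theorem exists_polynomial_eval_eq_one_on {K : Type*} [Field K] {A : Finset K} (hA : 0 ∉ A) :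
    ∃ χ : Polynomial K, χ.natDegree ≤ A.card ∧ χ.eval 0 = 0 ∧ ∀ a ∈ A, χ.eval a = 1 := by
  classical
  let r : K → K := fun a => if a = 0 then 0 else 1
  have eval_eq {a : K} (ha : a ∈ insert 0 A) :
      (Lagrange.interpolate (insert 0 A) id r).eval a = r a :=
    Lagrange.eval_interpolate_at_node r Function.injective_id.injOn ha
  refine ⟨Lagrange.interpolate (insert 0 A) id r, ?_, ?_, fun a ha => ?_⟩
  · refine Polynomial.natDegree_le_of_degree_le ?_
    simpa [Finset.card_insert_of_notMem hA] using
      Lagrange.degree_interpolate_le (s := insert 0 A) r Function.injective_id.injOn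
  · simpa [r] using eval_eq (Finset.mem_insert_self 0 A)
  · simpa [r, ne_of_mem_of_not_mem ha hA] using eval_eq (Finset.mem_insert_of_mem ha)

/-- The terms of the sequence `g` indexed by `s` form an `A`-weighted zero-sum sequence. The weights
may lie in any `R` acting on `M`, so that natural weights can be compared with their residues. -/
def IsWeightedZeroSum {ι R M : Type*} [AddCommMonoid M] [SMul R M] (A : Finset R) (g : ι → M)
    (s : Finset ι) : Prop :=
  ∃ a : ι → R, (∀ i ∈ s, a i ∈ A) ∧ ∑ i ∈ s, a i • g i = 0

namespace IsWeightedZeroSum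

variable {ι κ R M : Type*} [AddCommMonoid M]

theorem empty [Nonempty R] [SMul R M] (A : Finset R) (g : ι → M) : IsWeightedZeroSum A g ∅ := by
  simp [IsWeightedZeroSum]

theorem union [DecidableEq ι] [SMul R M] {A : Finset R} {g : ι → M} {s t : Finset ι}
    (hs : IsWeightedZeroSum A g s) (ht : IsWeightedZeroSum A g t) (hst : Disjoint s t) :
    IsWeightedZeroSum A g (s ∪ t) := by
  obtain ⟨a, ha, hsum_a⟩ := hs
  obtain ⟨b, hb, hsum_b⟩ := ht
  have ne_of_mem {i : ι} (hi : i ∈ t) : i ∉ s := Finset.disjoint_right.1 hst hi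
  refine ⟨fun i => if i ∈ s then a i else b i, fun i hi => ?_, ?_⟩
  · rcases Finset.mem_union.1 hi with hi | hi
    · simpa [hi] using ha i hi
    · simpa [ne_of_mem hi] using hb i hi
  · rw [Finset.sum_union hst, ← add_zero (0 : M)]
    congr 1
    · rw [← hsum_a]
      exact Finset.sum_congr rfl fun i hi => by simp [hi]
    · rw [← hsum_b]
      exact Finset.sum_congr rfl fun i hi => by simp [ne_of_mem hi]

theorem map [Zero R] [SMul R M] {A : Finset R} {g : κ → M} {e : ι ↪ κ} {s : Finset ι}
    (hs : IsWeightedZeroSum A (g ∘ e) s) : IsWeightedZeroSum A g (s.map e) := by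
  obtain ⟨a, ha, hsum⟩ := hs
  refine ⟨Function.extend e a 0, ?_, ?_⟩
  · simpa [e.injective.extend_apply] using ha
  · simpa [e.injective.extend_apply] using hsum

theorem of_image_natCast [Semiring R] [DecidableEq R] [Module R M] {A : Finset ℕ} {g : ι → M}
    {s : Finset ι} (hs : IsWeightedZeroSum (A.image (Nat.cast : ℕ → R)) g s) :
    IsWeightedZeroSum A g s := by
  obtain ⟨a, ha, hsum⟩ := hs
  choose! b hbA hba using fun i hi => Finset.mem_image.1 (ha i hi)
  refine ⟨b, hbA, ?_⟩
  rw [← hsum]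
  exact Finset.sum_congr rfl fun i hi => by rw [← hba i hi, Nat.cast_smul_eq_nsmul]

end IsWeightedZeroSum

theorem exists_isWeightedZeroSum_card_eq_mul {ι R M : Type*} [Nonempty R] [AddCommMonoid M]
    [SMul R M] {A : Finset R} {g : ι → M} {D n : ℕ}
    (block : ∀ S : Finset ι, D + n ≤ S.card → ∃ s ⊆ S, s.card = n ∧ IsWeightedZeroSum A g s)
    (m : ℕ) (S : Finset ι) (hS : D + m * n ≤ S.card) :
    ∃ s ⊆ S, s.card = m * n ∧ IsWeightedZeroSum A g s := by
  classical
  induction m generalizing S with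
  | zero => exact ⟨∅, S.empty_subset, by simp, .empty A g⟩
  | succ m ih =>
    rw [Nat.succ_mul] at hS ⊢
    obtain ⟨s, hsS, hs_card, hs⟩ := block S (by lia)
    obtain ⟨t, htS, ht_card, ht⟩ := ih (S \ s) (by rw [Finset.card_sdiff_of_subset hsS]; lia)
    have hst : Disjoint s t := Finset.disjoint_of_subset_right htS Finset.disjoint_sdiff
    refine ⟨s ∪ t, Finset.union_subset hsS (htS.trans Finset.sdiff_subset), ?_, hs.union ht hst⟩
    rw [Finset.card_union_of_disjoint hst, hs_card, ht_card, add_comm]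

section FiniteField

variable {σ K V : Type*} [Fintype σ] [Field K] [Fintype K] [AddCommGroup V] [Module K V]
  [FiniteDimensional K V] {A : Finset K}

open MvPolynomial in
theorem exists_ne_zero_sum_smul_eq_zero_and_sum_eval_eq_zero (hA : 0 ∉ A) (g : σ → V)
    {χ : Polynomial K} (hχ : χ.eval 0 = 0)
    (hdeg : (Fintype.card K - 1) * (Module.finrank K V + χ.natDegree) <
      Fintype.card σ * A.card) :
    ∃ x : σ → K, x ≠ 0 ∧ (∀ i, x i ≠ 0 → x i ∈ A) ∧
      ∑ i, x i • g i = 0 ∧ ∑ i, χ.eval (x i) = 0 := by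
  classical
  let b := Module.finBasis K V
  let f : Option (Fin (Module.finrank K V)) → MvPolynomial σ K := fun o =>
    o.elim (∑ i, Polynomial.aeval (X i) χ) (b.toMatrix g).toMvPolynomial
  have eval_none (x : σ → K) : eval x (f none) = ∑ i, χ.eval (x i) := by
    simp [f, ← coe_aeval_eq_eval, ← Polynomial.aeval_algHom_apply, Polynomial.coe_aeval_eq_eval]
  have eval_some (x : σ → K) (j) : eval x (f (some j)) = b.repr (∑ i, x i • g i) j := by
    simp [f, Matrix.toMvPolynomial_eval_eq_apply, Matrix.mulVec, dotProduct,
      Module.Basis.toMatrix_apply, mul_comm]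
  have totalDegree_none : (f none).totalDegree ≤ χ.natDegree :=
    totalDegree_finsetSum_le fun i _ => (totalDegree_aeval_le _ _).trans (by simp)
  have totalDegree_some (j) : (f (some j)).totalDegree ≤ 1 :=
    Matrix.toMvPolynomial_totalDegree_le (b.toMatrix g) j
  have hsum : ∑ o, (f o).totalDegree ≤ Module.finrank K V + χ.natDegree := by
    rw [Fintype.sum_option, add_comm]
    refine add_le_add ?_ totalDegree_none
    simpa using Finset.sum_le_card_nsmul Finset.univ _ 1 fun j _ => totalDegree_some j
  have zero_root (o) : eval 0 (f o) = 0 := by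
    cases o with
    | none => rw [eval_none]; simp [hχ]
    | some j => rw [eval_some]; simp
  obtain ⟨x, hx_ne, hxA, hx⟩ := exists_ne_common_zero_of_sum_totalDegree_lt
    (S := fun _ => insert 0 A) (fun _ => Finset.mem_insert_self 0 A) zero_root
    (((Nat.mul_le_mul_left _ hsum).trans_lt hdeg).trans_eq
      (by simp [Finset.card_insert_of_notMem hA]))
  refine ⟨x, hx_ne, fun i => Finset.mem_of_mem_insert_of_ne (hxA i), b.ext_elem fun j => ?_, ?_⟩
  · rw [← eval_some, hx, map_zero, Finsupp.zero_apply]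
  · rw [← eval_none, hx]

theorem exists_isWeightedZeroSum_card_cast_eq_zero (hA : 0 ∉ A) (g : σ → V)
    (hcard : (Fintype.card K - 1) * (Module.finrank K V + A.card) < Fintype.card σ * A.card) :
    ∃ s : Finset σ, s.Nonempty ∧ (s.card : K) = 0 ∧ IsWeightedZeroSum A g s := by
  classical
  obtain ⟨χ, hχ_deg, hχ_zero, hχ_one⟩ := exists_polynomial_eval_eq_one_on hA
  obtain ⟨x, hx_ne, hxA, hsum, hχ_sum⟩ := exists_ne_zero_sum_smul_eq_zero_and_sum_eval_eq_zero
    hA g hχ_zero ((by gcongr : _ ≤ _).trans_lt hcard)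
  refine ⟨Finset.univ.filter (x · ≠ 0), ?_, ?_, x, fun i hi => hxA i (Finset.mem_filter.1 hi).2, ?_⟩
  · obtain ⟨i, hi⟩ := Function.ne_iff.1 hx_ne
    exact ⟨i, by simpa using hi⟩
  · rw [Finset.natCast_card_filter]
    refine (Finset.sum_congr rfl fun i _ => ?_).trans hχ_sum
    by_cases hi : x i = 0
    · simp [hi, hχ_zero]
    · simp [hi, hχ_one _ (hxA i hi)]
  · rwa [Finset.sum_filter_of_ne fun i _ hi => left_ne_zero_of_smul hi]

end FiniteField

section PrimeField

variable {p : ℕ} {ι V : Type*} [AddCommGroup V] [Module (ZMod p) V] [Module.Finite (ZMod p) V]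

theorem exists_isWeightedZeroSum_card_eq_prime [Fact p.Prime] {A : Finset (ZMod p)} (hA : 0 ∉ A)
    (g : ι → V) {T : Finset ι} (hT : T.card < 2 * p)
    (hcard : (p - 1) * (Module.finrank (ZMod p) V + A.card) < T.card * A.card) :
    ∃ s ⊆ T, s.card = p ∧ IsWeightedZeroSum A g s := by
  obtain ⟨s, hs_ne, hs_card, hs⟩ := exists_isWeightedZeroSum_card_cast_eq_zero hA
    (g ∘ Function.Embedding.subtype (· ∈ T)) (by simpa [ZMod.card] using hcard)
  refine ⟨s.map (.subtype _), Finset.map_subtype_subset s, ?_, hs.map⟩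
  have card_le : s.card ≤ T.card := by simpa using s.card_le_univ
  rw [Finset.card_map]
  exact Nat.eq_of_dvd_of_lt_two_mul hs_ne.card_ne_zero ((ZMod.natCast_eq_zero_iff _ _).1 hs_card)
    (card_le.trans_lt hT)

theorem zero_notMem_image_natCast {N : ℕ} {A : Finset ℕ} (hA : A ⊆ Finset.Icc 1 (N - 1)) :
    (0 : ZMod N) ∉ A.image Nat.cast := by
  rw [Finset.mem_image]
  rintro ⟨a, ha, ha_zero⟩
  have := Finset.mem_Icc.1 (hA ha)
  exact Nat.not_dvd_of_pos_of_lt (by lia) (by lia) ((ZMod.natCast_eq_zero_iff a N).1 ha_zero)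

theorem card_image_natCast {N : ℕ} {A : Finset ℕ} (hA : A ⊆ Finset.Icc 1 (N - 1)) :
    (A.image (Nat.cast : ℕ → ZMod N)).card = A.card := by
  refine Finset.card_image_of_injOn fun a ha b hb hab => ?_
  have := Finset.mem_Icc.1 (hA ha)
  have := Finset.mem_Icc.1 (hA hb)
  exact ((ZMod.natCast_eq_natCast_iff a b N).1 hab).eq_of_lt_of_lt (by lia) (by lia)

theorem exists_isWeightedZeroSum_card_eq_prime_of_half (hp : p.Prime) {A : Finset ℕ}
    (hA : A ⊆ Finset.Icc 1 (p - 1)) (hA_card : 2 * A.card + 1 = p)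
    (hV : 2 * Module.finrank (ZMod p) V < p) (g : ι → V) (S : Finset ι)
    (hS : 2 * Module.finrank (ZMod p) V + p ≤ S.card) :
    ∃ s ⊆ S, s.card = p ∧ IsWeightedZeroSum A g s := by
  have : Fact p.Prime := ⟨hp⟩
  obtain ⟨T, hTS, hT_card⟩ := Finset.exists_subset_card_eq hS
  have hcard : (p - 1) * (Module.finrank (ZMod p) V + A.card) < T.card * A.card := by
    have A_card_pos : 0 < A.card := by have := hp.two_le; lia
    rw [hT_card, show p - 1 = 2 * A.card by lia]
    nlinarith
  obtain ⟨s, hsT, hs_card, hs⟩ := exists_isWeightedZeroSum_card_eq_prime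
    (zero_notMem_image_natCast hA) g (by lia : T.card < 2 * p) (by rwa [card_image_natCast hA])
  exact ⟨s, hsT.trans hTS, hs_card, hs.of_image_natCast⟩

end PrimeField

section LowerBound

variable {N : ℕ} {A : Finset ℕ}

theorem not_dvd_sum_of_card_le_two (hA : A ⊆ Finset.Icc 1 (N - 1)) (hsym : ∀ x ∈ A, N - x ∉ A)
    {ι : Type*} {F : Finset ι} (hF : F.Nonempty) (hF_card : F.card ≤ 2) {a : ι → ℕ}
    (ha : ∀ i ∈ F, a i ∈ A) : ¬ N ∣ ∑ i ∈ F, a i := by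
  classical
  have bounds {i : ι} (hi : i ∈ F) := Finset.mem_Icc.1 (hA (ha i hi))
  intro hdvd
  obtain hF_card | hF_card : F.card = 1 ∨ F.card = 2 := by have := hF.card_pos; lia
  · obtain ⟨i, rfl⟩ := Finset.card_eq_one.1 hF_card
    have := bounds (Finset.mem_singleton_self i)
    exact Nat.not_dvd_of_pos_of_lt (by lia) (by lia) (Finset.sum_singleton a i ▸ hdvd)
  · obtain ⟨i, j, hij, rfl⟩ := Finset.card_eq_two.1 hF_card
    have hi := bounds (i := i) (by simp)
    have hj := bounds (i := j) (by simp)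
    rw [Finset.sum_pair hij] at hdvd
    have add_eq : a i + a j = N := Nat.eq_of_dvd_of_lt_two_mul (by lia) hdvd (by lia)
    apply hsym (a i) (ha i (by simp))
    rw [← add_eq, Nat.add_sub_cancel_left]
    exact ha j (by simp)

/-- The extremal sequence `e₀, e₀, e₁, e₁, …, e_{d-1}, e_{d-1}, 0, 0, …` of length `t` in
`(ℤ/Nℤ)^d`. -/
def doubledBasis (N d t : ℕ) (k : Fin t) (j : Fin d) : ZMod N :=
  if (k : ℕ) / 2 = j then 1 else 0

theorem two_mul_le_of_mem_of_isWeightedZeroSum_doubledBasis (hA : A ⊆ Finset.Icc 1 (N - 1))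
    (hsym : ∀ x ∈ A, N - x ∉ A) {d t : ℕ} {s : Finset (Fin t)}
    (hs : IsWeightedZeroSum A (doubledBasis N d t) s) {i : Fin t} (hi : i ∈ s) :
    2 * d ≤ i := by
  by_contra! hid
  obtain ⟨a, ha, hsum⟩ := hs
  let F := s.filter fun k : Fin t => (k : ℕ) / 2 = (i : ℕ) / 2
  have F_card : F.card ≤ 2 := by
    refine (Finset.card_le_card_of_injOn (t := {2 * ((i : ℕ) / 2), 2 * ((i : ℕ) / 2) + 1})
      Fin.val (fun k hk => ?_) Fin.val_injective.injOn).trans Finset.card_le_two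
    have := (Finset.mem_filter.1 hk).2
    simp only [Finset.coe_insert, Finset.coe_singleton, Set.mem_insert_iff, Set.mem_singleton_iff]
    lia
  have hdvd : N ∣ ∑ k ∈ F, a k := by
    rw [← ZMod.natCast_eq_zero_iff, Nat.cast_sum, Finset.sum_filter]
    simpa [doubledBasis] using congrFun hsum ⟨(i : ℕ) / 2, by lia⟩
  exact not_dvd_sum_of_card_le_two hA hsym ⟨i, by simp [F, hi]⟩ F_card
    (fun k hk => ha k (Finset.mem_filter.1 hk).1) hdvd

theorem not_hasZeroCombLen_doubledBasis (hA : A ⊆ Finset.Icc 1 (N - 1))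
    (hsym : ∀ x ∈ A, N - x ∉ A) {d n t : ℕ} (hn : 0 < n) (ht : t < 2 * d + n) :
    ¬ hasZeroCombLen A n (doubledBasis N d t) := by
  rintro ⟨s, rfl, hs⟩
  have map_subset : s.map Fin.valEmbedding ⊆ Finset.Ico (2 * d) t := by
    intro k hk
    obtain ⟨i, hi, rfl⟩ := Finset.mem_map.1 hk
    exact Finset.mem_Ico.2
      ⟨two_mul_le_of_mem_of_isWeightedZeroSum_doubledBasis hA hsym hs hi, i.isLt⟩
  have card_le := Finset.card_le_card map_subset
  rw [Finset.card_map, Nat.card_Ico] at card_le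
  lia

end LowerBound

theorem stmt19_general {p d m : ℕ} (hp : p.Prime) (hm : 0 < m) (hpd : 2 * d + 1 ≤ p)
    (A : Finset ℕ) (hsub : A ⊆ Finset.Icc 1 (p - 1)) (hcard : 2 * A.card + 1 = p)
    (hsym : ∀ x ∈ A, p - x ∉ A) :
    IsLeast {t : ℕ | ∀ g : Fin t → (Fin d → ZMod p), hasZeroCombLen A (m * p) g}
      (2 * d + m * p) := by
  have : Fact p.Prime := ⟨hp⟩
  have finrank_eq : Module.finrank (ZMod p) (Fin d → ZMod p) = d := by simp
  refine ⟨fun g => ?_, fun t ht => ?_⟩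
  · obtain ⟨s, -, hs_card, hs⟩ := exists_isWeightedZeroSum_card_eq_mul
      (exists_isWeightedZeroSum_card_eq_prime_of_half hp hsub hcard (by lia) g)
      m Finset.univ (by simp)
    exact ⟨s, hs_card, hs⟩
  · by_contra! hlt
    exact not_hasZeroCombLen_doubledBasis hsub hsym (Nat.mul_pos hm hp.pos) hlt (ht _)

theorem stmt19 {p d : ℕ} (hp : p.Prime) (hmod : p % 4 = 3) (hd : 1 ≤ d)
    (hpd : 2 * d + 1 ≤ p) (A5 : Finset ℕ) (hsub : A5 ⊆ Finset.Icc 1 (p - 1))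
    (hcard : A5.card = (p - 1) / 2)
    (hsym : ∀ x ∈ A5, p - x ∉ A5) :
    IsLeast {t : ℕ | ∀ g : Fin t → (Fin d → ZMod p),
      hasZeroCombLen A5 (p ^ d) g} (2 * d + p ^ d) := by
  rw [← Nat.pow_pred_mul hd]
  exact stmt19_general hp (Nat.pow_pos hp.pos) hpd A5 hsub (by lia) hsym
end
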